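/- arXiv:math/0412051 — 5 statements merged into one kernel-verified Lean document; each statement's English description precedes it below -/
import Mathlib

section
/- There exists a point x₀ ∈ ℝ² with 0 < |x₀| < δ/8 such that φ_t(x₀) → 0 as t → ∞ (existence of a point on the stable manifold; Lemma 3.2, existence part). -/
/-!
The linearization `h` carries the stable manifold to the horizontal axis, on which `e^{Bt}`
contracts. Take `x₀ = h⁻¹(δ/20, 0)`. As long as the orbit is in `U`, the conjugation gives
`φ_t x₀ = h⁻¹(e^{-μt} δ/20, 0)`, and the bound `|h⁻¹ y| ≤ 2|y|` yields
`|φ_t x₀| ≤ e^{-μt} δ/10` (`norm_phi_le_of_mem`). So the orbit never has norm in `(δ/10, δ]`, and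
by the intermediate value theorem, starting from norm at most `δ/10`, it never reaches norms above
`δ/10`. Hence it stays in `U`, the exponential bound holds for all `t ≥ 0`, and the orbit tends
to `0`.
-/

open Filter Topology Metric Real RealInnerProductSpace

noncomputable section

/-- An element of `ℝ²` (with the Euclidean norm) with given coordinates. -/
def vec2 (a b : ℝ) : EuclideanSpace ℝ (Fin 2) := (WithLp.equiv 2 (Fin 2 → ℝ)).symm ![a, b]

/-- The setup of Turner, "Convergence of Markov processes near saddle fixed points",
Section 3: a saddle-type vector field `b x = B x + τ x` with `B = diag(-μ, λ)`,
a flow `φ` for `b`, a Hartman linearization `h` on a neighbourhood `U` of `0`,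
and a radius `δ` on which `h` is close to the identity. -/
structure SaddleFlow where
  lam : ℝ
  mu : ℝ
  lam_pos : 0 < lam
  mu_pos : 0 < mu
  /-- the nonlinearity τ -/
  tau : EuclideanSpace ℝ (Fin 2) → EuclideanSpace ℝ (Fin 2)
  tau_smooth : ContDiff ℝ 2 tau
  tau_zero : tau 0 = 0
  dtau_zero : fderiv ℝ tau 0 = 0
  /-- the flow of `b x = B x + τ x` -/
  phi : ℝ → EuclideanSpace ℝ (Fin 2) → EuclideanSpace ℝ (Fin 2)
  phi_zero : ∀ x, phi 0 x = x
  phi_hasDerivAt : ∀ t x, HasDerivAt (fun s => phi s x)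
      (vec2 (-mu * (phi t x) 0) (lam * (phi t x) 1) + tau (phi t x)) t
  phi_add : ∀ t s x, phi (t + s) x = phi t (phi s x)
  phi_contDiff : ∀ t, ContDiff ℝ 1 (phi t)
  /-- the domain of the Hartman linearization -/
  U : Set (EuclideanSpace ℝ (Fin 2))
  U_open : IsOpen U
  U_mem : (0 : EuclideanSpace ℝ (Fin 2)) ∈ U
  /-- the linearizing C¹ diffeomorphism `h : U → V = h '' U` and its inverse -/
  h : EuclideanSpace ℝ (Fin 2) → EuclideanSpace ℝ (Fin 2)
  hinv : EuclideanSpace ℝ (Fin 2) → EuclideanSpace ℝ (Fin 2)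
  h_smooth : ∀ x ∈ U, ContDiffAt ℝ 1 h x
  hinv_smooth : ∀ y ∈ h '' U, ContDiffAt ℝ 1 hinv y
  V_open : IsOpen (h '' U)
  left_inv : ∀ x ∈ U, hinv (h x) = x
  right_inv : ∀ y ∈ h '' U, h (hinv y) = y
  /-- the Hölder exponent of the partial derivatives of `h`, `h⁻¹` -/
  alpha0 : ℝ
  alpha0_mem : alpha0 ∈ Set.Ioc (0 : ℝ) 1
  holder : ∃ C : ℝ,
      (∀ x ∈ U, ∀ y ∈ U, ‖fderiv ℝ h x - fderiv ℝ h y‖ ≤ C * ‖x - y‖ ^ alpha0) ∧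
      (∀ x ∈ h '' U, ∀ y ∈ h '' U,
        ‖fderiv ℝ hinv x - fderiv ℝ hinv y‖ ≤ C * ‖x - y‖ ^ alpha0)
  /-- `h x = x + o(|x|)` as `x → 0` -/
  h_littleO : (fun x => h x - x) =o[𝓝 (0 : EuclideanSpace ℝ (Fin 2))] (fun x => x)
  /-- the conjugation `h (φ_t x) = e^{Bt} (h x)` -/
  h_conj : ∀ t x, x ∈ U → phi t x ∈ U →
      h (phi t x) = vec2 (Real.exp (-mu * t) * (h x) 0) (Real.exp (lam * t) * (h x) 1)
  /-- the radius δ -/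
  delta : ℝ
  delta_pos : 0 < delta
  delta_lt_one : delta < 1
  ball_sub : closedBall (0 : EuclideanSpace ℝ (Fin 2)) delta ⊆ U ∩ h '' U
  /-- `sup_{0<|x|<δ} max(|h x|/|x|, |h⁻¹ x|/|x|) < 2` -/
  h_ratio : ∃ c : ℝ, c < 2 ∧ ∀ x : EuclideanSpace ℝ (Fin 2), ‖x‖ < delta →
      ‖h x‖ ≤ c * ‖x‖ ∧ ‖hinv x‖ ≤ c * ‖x‖
  /-- `sup_{|x|<δ} max(‖Dh(x) − I‖, ‖Dh⁻¹(x) − I‖) < 1/2` -/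
  deriv_close : ∃ c : ℝ, c < 1/2 ∧ ∀ x : EuclideanSpace ℝ (Fin 2), ‖x‖ < delta →
      ‖fderiv ℝ h x - ContinuousLinearMap.id ℝ (EuclideanSpace ℝ (Fin 2))‖ ≤ c ∧
      ‖fderiv ℝ hinv x - ContinuousLinearMap.id ℝ (EuclideanSpace ℝ (Fin 2))‖ ≤ c

lemma norm_vec2_zero (a : ℝ) : ‖vec2 a 0‖ = |a| := by
  simp [vec2, EuclideanSpace.norm_eq, Real.sqrt_sq_eq_abs]

lemma SaddleFlow.norm_hinv_le (S : SaddleFlow) {y : EuclideanSpace ℝ (Fin 2)}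
    (hy : ‖y‖ < S.delta) : ‖S.hinv y‖ ≤ 2 * ‖y‖ := by
  obtain ⟨c, hc, hb⟩ := S.h_ratio
  exact (hb y hy).2.trans (mul_le_mul_of_nonneg_right hc.le (norm_nonneg y))

/-- A point of `U` that `h` sends to the horizontal axis at distance `r < δ` from `0` contracts
exponentially along its orbit, at every time `t ≥ 0` at which the orbit is in `U`. -/
lemma SaddleFlow.norm_phi_le_of_mem (S : SaddleFlow) {x : EuclideanSpace ℝ (Fin 2)} {r t : ℝ}
    (hr : 0 < r) (hrδ : r < S.delta) (hxU : x ∈ S.U) (hx : S.h x = vec2 r 0)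
    (ht : 0 ≤ t) (htU : S.phi t x ∈ S.U) :
    ‖S.phi t x‖ ≤ 2 * (Real.exp (-S.mu * t) * r) := by
  have hconj : S.h (S.phi t x) = vec2 (Real.exp (-S.mu * t) * r) 0 := by
    rw [S.h_conj t x hxU htU, hx]
    simp [vec2]
  have hpos : 0 < Real.exp (-S.mu * t) * r := by positivity
  have hle : Real.exp (-S.mu * t) * r ≤ r := by
    have : Real.exp (-S.mu * t) ≤ 1 := Real.exp_le_one_iff.2 (by nlinarith [S.mu_pos])
    nlinarith
  have hnorm : ‖vec2 (Real.exp (-S.mu * t) * r) 0‖ = Real.exp (-S.mu * t) * r := by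
    rw [norm_vec2_zero, abs_of_pos hpos]
  rw [← S.left_inv _ htU, hconj]
  have := S.norm_hinv_le (y := vec2 (Real.exp (-S.mu * t) * r) 0) (by rw [hnorm]; linarith)
  rwa [hnorm] at this

/-- Lemma 3.2 (existence part): there exists a point `x₀` with `0 < |x₀| < δ/8`
lying on the stable manifold, i.e. `φ_t(x₀) → 0` as `t → ∞`. -/
theorem stable_manifold_exists (S : SaddleFlow) :
    ∃ x₀ : EuclideanSpace ℝ (Fin 2), 0 < ‖x₀‖ ∧ ‖x₀‖ < S.delta / 8 ∧
      Tendsto (fun t => S.phi t x₀) atTop (𝓝 (0 : EuclideanSpace ℝ (Fin 2))) := by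
  have hδ := S.delta_pos
  have hU : ∀ y : EuclideanSpace ℝ (Fin 2), ‖y‖ ≤ S.delta → y ∈ S.U := fun y hy =>
    (S.ball_sub (mem_closedBall_zero_iff.2 hy)).1
  obtain ⟨r, hr⟩ : ∃ r, r = S.delta / 20 := ⟨_, rfl⟩
  have hrpos : 0 < r := by linarith
  have hnr : ‖vec2 r 0‖ = r := by rw [norm_vec2_zero, abs_of_pos hrpos]
  obtain ⟨x₀, hx₀U, hx₀⟩ :=
    (S.ball_sub (mem_closedBall_zero_iff.2 (show ‖vec2 r 0‖ ≤ S.delta by linarith))).2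
  have hx₀n : ‖x₀‖ ≤ 2 * r := by
    have := S.norm_hinv_le (y := vec2 r 0) (by linarith)
    rwa [← hx₀, S.left_inv _ hx₀U, hx₀, hnr] at this
  have key : ∀ t, 0 ≤ t → S.phi t x₀ ∈ S.U →
      ‖S.phi t x₀‖ ≤ 2 * (Real.exp (-S.mu * t) * r) := fun t ht htU =>
    S.norm_phi_le_of_mem hrpos (by linarith) hx₀U hx₀ ht htU
  have hcont : Continuous fun t => ‖S.phi t x₀‖ :=
    (continuous_iff_continuousAt.2 fun t => (S.phi_hasDerivAt t x₀).continuousAt).norm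
  have hstay : ∀ t, 0 ≤ t → ‖S.phi t x₀‖ ≤ 2 * r := by
    intro t ht
    by_contra! hlt
    -- The orbit would cross a level in the forbidden range `(2r, δ]`.
    have hmem : min ‖S.phi t x₀‖ S.delta ∈ Set.Icc ‖S.phi 0 x₀‖ ‖S.phi t x₀‖ :=
      ⟨by rw [S.phi_zero]; exact le_min (by linarith) (by linarith), min_le_left _ _⟩
    obtain ⟨s, hs, hse⟩ := intermediate_value_Icc ht hcont.continuousOn hmem
    have hse' : ‖S.phi s x₀‖ = min ‖S.phi t x₀‖ S.delta := hse
    have h1 := key s hs.1 (hU _ (hse'.le.trans (min_le_right _ _)))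
    have h2 : Real.exp (-S.mu * s) ≤ 1 :=
      Real.exp_le_one_iff.2 (by nlinarith [S.mu_pos, hs.1])
    have h3 : 2 * r < min ‖S.phi t x₀‖ S.delta := lt_min hlt (by linarith)
    nlinarith
  refine ⟨x₀, ?_, by linarith, ?_⟩
  · rw [norm_pos_iff]
    rintro rfl
    -- The ratio bound at the point `0` forces `h 0 = 0`.
    obtain ⟨c, -, hb⟩ := S.h_ratio
    have h0 := (hb 0 (by simpa using hδ)).1
    rw [hx₀, hnr, norm_zero, mul_zero] at h0
    linarith
  · have hexp : Tendsto (fun t : ℝ => 2 * (Real.exp (-S.mu * t) * r)) atTop (𝓝 0) := by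
      have h1 : Tendsto (fun t : ℝ => -S.mu * t) atTop atBot :=
        tendsto_id.const_mul_atTop_of_neg (neg_lt_zero.2 S.mu_pos)
      simpa using ((Real.tendsto_exp_atBot.comp h1).mul_const r).const_mul 2
    refine squeeze_zero_norm' ?_ hexp
    filter_upwards [eventually_ge_atTop 0] with t ht
    exact key t ht (hU _ ((hstay t ht).trans (by linarith)))
end
end

section
/- Let x₀ ∈ ℝ² satisfy 0 < |x₀| < δ/8 and φ_t(x₀) → 0 as t → ∞. Then there exists x̄₀ ∈ ℝ with 0 < |x̄₀| < δ/4 such that e^{μt} φ_t(x₀) → (x̄₀, 0) as t → ∞, and |φ_t(x₀)| ≤ 2|x̄₀| e^{−μt} < (δ/2) e^{−μt} for all t ≥ 0 (Lemma 3.2, asymptotics part). -/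
/-!
The conjugation `h` turns the orbit of `x₀` into an orbit `(e^{-μt} y₀, e^{λt} y₁)` of the linear
flow, where `y = h x₀`. Since the orbit tends to `0`, so does its image, which forces `y₁ = 0`;
the required number is `xb = y₀`, and the decay bound below at `t = 0` shows that it is nonzero.

The conjugation is only available while the orbit is in `U`. As long as it is in the ball of
radius `δ`, its norm is at most `2 |y₀| e^{-μt} < δ/2` by the bound on `h⁻¹`, so by the
intermediate value theorem the norm can never reach `3δ/4`, and the orbit stays in the ball for all
`t ≥ 0` (`orbit_norm_lt`). The decay bound follows at once, and since `e^{μt} h (φ_t x₀) = (y₀, 0)`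
exactly, the limit follows from `h x - x = o(|x|)` and the boundedness of `e^{μt} |φ_t x₀|`.
-/

open Filter Topology Metric Real RealInnerProductSpace

noncomputable section

lemma smul_vec2_zero (r a : ℝ) : r • vec2 a 0 = vec2 (r * a) 0 := by
  ext i; fin_cases i <;> simp [vec2]

lemma eq_vec2 (y : EuclideanSpace ℝ (Fin 2)) : y = vec2 (y 0) (y 1) := by
  ext i; fin_cases i <;> simp [vec2]

namespace SaddleFlow

variable (S : SaddleFlow)

lemma mem_U_of_norm_lt {x : EuclideanSpace ℝ (Fin 2)} (hx : ‖x‖ < S.delta) : x ∈ S.U :=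
  (S.ball_sub (by simpa using hx.le)).1

lemma norm_h_le {x : EuclideanSpace ℝ (Fin 2)} (hx : ‖x‖ < S.delta) : ‖S.h x‖ ≤ 2 * ‖x‖ := by
  obtain ⟨c, hc, H⟩ := S.h_ratio
  exact (H x hx).1.trans (by gcongr)

lemma norm_hinv_le_s1 {x : EuclideanSpace ℝ (Fin 2)} (hx : ‖x‖ < S.delta) :
    ‖S.hinv x‖ ≤ 2 * ‖x‖ := by
  obtain ⟨c, hc, H⟩ := S.h_ratio
  exact (H x hx).2.trans (by gcongr)

/-- A point whose orbit tends to `0` has an image under `h` on the stable axis: otherwise the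
second coordinate `e^{λt} (h x) 1` of `h (φ_t x)` could not tend to `0`. -/
lemma h_snd_eq_zero {x : EuclideanSpace ℝ (Fin 2)} (hx : ‖x‖ < S.delta)
    (hst : Tendsto (fun t => S.phi t x) atTop (𝓝 0)) : (S.h x) 1 = 0 := by
  have hn : Tendsto (fun t => 2 * ‖S.phi t x‖) atTop (𝓝 0) := by
    simpa using hst.norm.const_mul 2
  have hlt : ∀ᶠ t in atTop, ‖S.phi t x‖ < S.delta := by
    have h0 : Tendsto (fun t => ‖S.phi t x‖) atTop (𝓝 0) := by simpa using hst.norm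
    exact h0.eventually_lt_const S.delta_pos
  have hle : ∀ᶠ t in atTop, |(S.h x) 1| ≤ 2 * ‖S.phi t x‖ := by
    filter_upwards [hlt, eventually_ge_atTop (0 : ℝ)] with t ht ht0
    have h1 := S.norm_h_le ht
    have h2 := PiLp.norm_apply_le (S.h (S.phi t x)) 1
    rw [S.h_conj t x (S.mem_U_of_norm_lt hx) (S.mem_U_of_norm_lt ht)] at h1 h2
    have h3 : |Real.exp (S.lam * t) * (S.h x) 1| ≤ 2 * ‖S.phi t x‖ := by
      refine le_trans ?_ (h2.trans h1)
      simp [vec2]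
    rw [abs_mul, abs_of_pos (Real.exp_pos _)] at h3
    have h4 : 1 ≤ Real.exp (S.lam * t) := Real.one_le_exp (mul_nonneg S.lam_pos.le ht0)
    nlinarith [abs_nonneg ((S.h x) 1)]
  exact abs_nonpos_iff.1 (ge_of_tendsto hn hle)

section Orbit

variable {S} {x : EuclideanSpace ℝ (Fin 2)}

lemma h_phi_eq (hx : ‖x‖ < S.delta) (h1 : (S.h x) 1 = 0) {t : ℝ} (ht : ‖S.phi t x‖ < S.delta) :
    S.h (S.phi t x) = Real.exp (-S.mu * t) • vec2 ((S.h x) 0) 0 := by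
  rw [S.h_conj t x (S.mem_U_of_norm_lt hx) (S.mem_U_of_norm_lt ht), h1, smul_vec2_zero, mul_zero]

/-- The decay bound, as long as the orbit is known to be in the domain of the conjugation. -/
lemma norm_phi_le_of_lt (hx : ‖x‖ < S.delta / 8) (h1 : (S.h x) 1 = 0)
    (h0 : |(S.h x) 0| < S.delta / 4) {t : ℝ} (ht0 : 0 ≤ t) (ht : ‖S.phi t x‖ < S.delta) :
    ‖S.phi t x‖ ≤ 2 * |(S.h x) 0| * Real.exp (-S.mu * t) := by
  have hd := S.delta_pos
  have hh := h_phi_eq (by linarith) h1 ht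
  have he : Real.exp (-S.mu * t) ≤ 1 := Real.exp_le_one_iff.2 (by nlinarith [S.mu_pos])
  have hn : ‖S.h (S.phi t x)‖ = Real.exp (-S.mu * t) * |(S.h x) 0| := by
    rw [hh, norm_smul, norm_vec2_zero, Real.norm_of_nonneg (Real.exp_pos _).le]
  have hi := S.norm_hinv_le_s1 (x := S.h (S.phi t x))
    (by rw [hn]; nlinarith [abs_nonneg ((S.h x) 0)])
  rw [S.left_inv _ (S.mem_U_of_norm_lt ht), hn] at hi
  linarith

/-- The orbit never leaves the ball of radius `δ`: there its norm is below `δ/2`, so by continuity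
it cannot take the value `3δ/4`. -/
lemma orbit_norm_lt (hx : ‖x‖ < S.delta / 8) (h1 : (S.h x) 1 = 0)
    (h0 : |(S.h x) 0| < S.delta / 4) {t : ℝ} (ht0 : 0 ≤ t) : ‖S.phi t x‖ < S.delta := by
  by_contra! hcon
  have hd := S.delta_pos
  have hcont : Continuous fun s => ‖S.phi s x‖ :=
    (continuous_iff_continuousAt.2 fun s => (S.phi_hasDerivAt s x).continuousAt).norm
  obtain ⟨s, hs, hse⟩ := intermediate_value_Icc ht0 hcont.continuousOn
    (show 3 * S.delta / 4 ∈ Set.Icc ‖S.phi 0 x‖ ‖S.phi t x‖ from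
      ⟨by rw [S.phi_zero]; linarith, by linarith⟩)
  have hse' : ‖S.phi s x‖ = 3 * S.delta / 4 := hse
  have hb := norm_phi_le_of_lt hx h1 h0 hs.1 (by linarith)
  have he : Real.exp (-S.mu * s) ≤ 1 := Real.exp_le_one_iff.2 (by nlinarith [S.mu_pos, hs.1])
  nlinarith [abs_nonneg ((S.h x) 0)]

end Orbit

end SaddleFlow

/-- Lemma 3.2 (asymptotics part): if `0 < |x₀| < δ/8` and `φ_t(x₀) → 0`, then there is
`x̄₀ ∈ ℝ` with `0 < |x̄₀| < δ/4` such that `e^{μt} φ_t(x₀) → (x̄₀, 0)` and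
`|φ_t(x₀)| ≤ 2|x̄₀| e^{−μt} < (δ/2) e^{−μt}` for all `t ≥ 0`. -/
theorem stable_manifold_asymptotics (S : SaddleFlow) (x₀ : EuclideanSpace ℝ (Fin 2))
    (hx₀_pos : 0 < ‖x₀‖) (hx₀_lt : ‖x₀‖ < S.delta / 8)
    (hx₀_stable : Tendsto (fun t => S.phi t x₀) atTop (𝓝 (0 : EuclideanSpace ℝ (Fin 2)))) :
    ∃ xb : ℝ, 0 < |xb| ∧ |xb| < S.delta / 4 ∧
      Tendsto (fun t => Real.exp (S.mu * t) • S.phi t x₀) atTop (𝓝 (vec2 xb 0)) ∧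
      ∀ t : ℝ, 0 ≤ t →
        ‖S.phi t x₀‖ ≤ 2 * |xb| * Real.exp (-S.mu * t) ∧
        2 * |xb| * Real.exp (-S.mu * t) < S.delta / 2 * Real.exp (-S.mu * t) := by
  have hd := S.delta_pos
  have hxd : ‖x₀‖ < S.delta := by linarith
  have h1 := S.h_snd_eq_zero hxd hx₀_stable
  have hy : S.h x₀ = vec2 ((S.h x₀) 0) 0 := by
    conv_lhs => rw [eq_vec2 (S.h x₀), h1]
  have hyn : ‖S.h x₀‖ = |(S.h x₀) 0| := by
    conv_lhs => rw [hy, norm_vec2_zero]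
  have h0 : |(S.h x₀) 0| < S.delta / 4 := by
    have := S.norm_h_le hxd
    rw [hyn] at this
    linarith
  have hdecay : ∀ t : ℝ, 0 ≤ t →
      ‖S.phi t x₀‖ ≤ 2 * |(S.h x₀) 0| * Real.exp (-S.mu * t) := fun t ht =>
    SaddleFlow.norm_phi_le_of_lt hx₀_lt h1 h0 ht (SaddleFlow.orbit_norm_lt hx₀_lt h1 h0 ht)
  refine ⟨(S.h x₀) 0, ?_, h0, ?_, fun t ht => ⟨hdecay t ht, ?_⟩⟩
  -- At `t = 0` the decay bound reads `‖x₀‖ ≤ 2 |y₀|`, so `y₀ ≠ 0`.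
  · have := hdecay 0 le_rfl
    rw [S.phi_zero, mul_zero, Real.exp_zero] at this
    linarith
  · have hlo := S.h_littleO.comp_tendsto hx₀_stable
    have hlo2 := (Asymptotics.isBigO_refl (fun t => Real.exp (S.mu * t)) atTop).smul_isLittleO hlo
    have hbdd : (fun t => Real.exp (S.mu * t) • S.phi t x₀) =O[atTop] fun _ => (1 : ℝ) := by
      refine Asymptotics.IsBigO.of_bound (2 * |(S.h x₀) 0|) ?_
      filter_upwards [eventually_ge_atTop (0 : ℝ)] with t ht
      have hee : Real.exp (S.mu * t) * Real.exp (-S.mu * t) = 1 := by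
        rw [← Real.exp_add]; simp
      rw [norm_smul, Real.norm_of_nonneg (Real.exp_pos _).le, norm_one, mul_one]
      calc Real.exp (S.mu * t) * ‖S.phi t x₀‖
          ≤ Real.exp (S.mu * t) * (2 * |(S.h x₀) 0| * Real.exp (-S.mu * t)) := by
            gcongr; exact hdecay t ht
        _ = 2 * |(S.h x₀) 0| := by linear_combination 2 * |(S.h x₀) 0| * hee
    have hlim := (Asymptotics.isLittleO_one_iff ℝ).1 (hlo2.trans_isBigO hbdd)
    have hlim2 := (tendsto_const_nhds (x := vec2 ((S.h x₀) 0) 0)).sub hlim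
    rw [sub_zero] at hlim2
    refine hlim2.congr' ?_
    filter_upwards [eventually_ge_atTop (0 : ℝ)] with t ht
    have hh := SaddleFlow.h_phi_eq hxd h1 (SaddleFlow.orbit_norm_lt hx₀_lt h1 h0 ht)
    have hee : Real.exp (S.mu * t) * Real.exp (-S.mu * t) = 1 := by
      rw [← Real.exp_add]; simp
    simp only [Function.comp_apply, hh, smul_sub, smul_smul, hee, one_smul, sub_sub_cancel]
  · have := Real.exp_pos (-S.mu * t)
    gcongr
    linarith
end
end

section
/- Let x₀ ∈ ℝ² satisfy 0 < |x₀| < δ/8 and φ_t(x₀) → 0 as t → ∞. Then there exists a nonzero row vector D₀ ∈ (ℝ²)* (namely D₀ = ∇h₂(x₀), the second row of Dh(x₀)) such that e^{−λt} Dφ_t(x₀) converges, as t → ∞, to the 2×2 matrix whose first row is (0, 0) and whose second row is D₀ (Lemma 3.3(i)). -/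
/-!
On the neighbourhood of `x₀` that `φ_t` maps into `U`, the conjugation reads
`φ_t = h⁻¹ ∘ e^{Bt} ∘ h`, so with `y_t = h (φ_t x₀)` the chain rule gives
`e^{-λt} Dφ_t(x₀) = Dh⁻¹(y_t) ∘ (e^{-λt} e^{Bt}) ∘ Dh(x₀)`.
Since `φ_t x₀ → 0` also `y_t → 0`, hence `Dh⁻¹(y_t) → Dh⁻¹(0) = I` because `h⁻¹` is `C¹` and
`Dh(0) = I`, while `e^{-λt} e^{Bt} = diag (e^{-(μ+λ)t}, 1) → diag (0, 1)`. The limit is therefore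
`diag (0, 1) ∘ Dh(x₀)`, whose second row is `∇h₂(x₀)`; that row does not vanish because
`‖Dh(x₀) - I‖ < 1/2`.
-/

open Filter Topology Metric Real RealInnerProductSpace

noncomputable section

/-- The diagonal matrix `diag (a, b)` as a continuous linear map of `ℝ²`. -/
def diagCLM (a b : ℝ) : EuclideanSpace ℝ (Fin 2) →L[ℝ] EuclideanSpace ℝ (Fin 2) :=
  a • (EuclideanSpace.proj (0 : Fin 2)).smulRight (EuclideanSpace.single 0 (1 : ℝ)) +
    b • (EuclideanSpace.proj (1 : Fin 2)).smulRight (EuclideanSpace.single 1 (1 : ℝ))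

lemma diagCLM_apply (a b : ℝ) (x : EuclideanSpace ℝ (Fin 2)) :
    diagCLM a b x = vec2 (a * x 0) (b * x 1) := by
  ext i
  fin_cases i <;> simp [diagCLM, vec2]

lemma smul_diagCLM (c a b : ℝ) : c • diagCLM a b = diagCLM (c * a) (c * b) := by
  simp [diagCLM, smul_add, smul_smul]

namespace SaddleFlow

variable (S : SaddleFlow)

lemma h_zero : S.h 0 = 0 := by
  -- The little-o bound holds at the centre itself, where its right-hand side vanishes.
  have := (S.h_littleO.def one_pos).self_of_nhds
  simpa using this

lemma hasFDerivAt_h_zero :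
    HasFDerivAt S.h (ContinuousLinearMap.id ℝ (EuclideanSpace ℝ (Fin 2))) 0 := by
  refine HasFDerivAt.of_isLittleO ?_
  simpa [S.h_zero] using S.h_littleO

lemma contDiffAt_hinv_zero : ContDiffAt ℝ 1 S.hinv 0 :=
  S.hinv_smooth 0 ⟨0, S.U_mem, S.h_zero⟩

lemma fderiv_hinv_zero :
    fderiv ℝ S.hinv 0 = ContinuousLinearMap.id ℝ (EuclideanSpace ℝ (Fin 2)) := by
  have h1 : HasFDerivAt S.hinv (fderiv ℝ S.hinv 0) (S.h 0) := by
    rw [S.h_zero]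
    exact (S.contDiffAt_hinv_zero.differentiableAt one_ne_zero).hasFDerivAt
  have h2 := h1.comp 0 S.hasFDerivAt_h_zero
  have h3 : S.hinv ∘ S.h =ᶠ[𝓝 0] id := by
    filter_upwards [S.U_open.mem_nhds S.U_mem] with x hx using S.left_inv x hx
  have h4 := (h2.congr_of_eventuallyEq h3.symm).unique (hasFDerivAt_id 0)
  simpa using h4

/-- The chain rule for `φ_t = h⁻¹ ∘ e^{Bt} ∘ h`, valid as soon as the endpoint `φ_t x` lies
in `U`: by continuity `φ_t` then maps a neighbourhood of `x` into `U`. -/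
lemma fderiv_phi {t : ℝ} {x : EuclideanSpace ℝ (Fin 2)} (hx : x ∈ S.U) (ht : S.phi t x ∈ S.U) :
    fderiv ℝ (S.phi t) x = (fderiv ℝ S.hinv (S.h (S.phi t x))).comp
      ((diagCLM (Real.exp (-S.mu * t)) (Real.exp (S.lam * t))).comp (fderiv ℝ S.h x)) := by
  have hconj : ∀ y ∈ S.U, S.phi t y ∈ S.U →
      diagCLM (Real.exp (-S.mu * t)) (Real.exp (S.lam * t)) (S.h y) = S.h (S.phi t y) := by
    intro y hy hty
    rw [diagCLM_apply, S.h_conj t y hy hty]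
  have hev : S.phi t =ᶠ[𝓝 x]
      S.hinv ∘ diagCLM (Real.exp (-S.mu * t)) (Real.exp (S.lam * t)) ∘ S.h := by
    filter_upwards [S.U_open.mem_nhds hx,
      (S.phi_contDiff t).continuous.continuousAt (S.U_open.mem_nhds ht)] with y hy hty
    simp only [Function.comp_apply]
    rw [hconj y hy hty, S.left_inv _ hty]
  have h1 : HasFDerivAt S.h (fderiv ℝ S.h x) x :=
    ((S.h_smooth x hx).differentiableAt one_ne_zero).hasFDerivAt
  have h2 := (diagCLM (Real.exp (-S.mu * t)) (Real.exp (S.lam * t))).hasFDerivAt.comp x h1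
  have h3 : HasFDerivAt S.hinv (fderiv ℝ S.hinv (S.h (S.phi t x)))
      ((diagCLM (Real.exp (-S.mu * t)) (Real.exp (S.lam * t)) ∘ S.h) x) := by
    rw [Function.comp_apply, hconj x hx ht]
    exact ((S.hinv_smooth _ ⟨_, ht, rfl⟩).differentiableAt one_ne_zero).hasFDerivAt
  exact ((h3.comp x h2).congr_of_eventuallyEq hev).fderiv

/-- The second row of `Dh(x)` is nonzero near the origin, since its second entry exceeds `1/2`. -/
lemma fderiv_h_apply_single_pos {x : EuclideanSpace ℝ (Fin 2)} (hx : ‖x‖ < S.delta) :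
    0 < fderiv ℝ S.h x (EuclideanSpace.single 1 (1 : ℝ)) 1 := by
  obtain ⟨c, hc, hcx⟩ := S.deriv_close
  set e : EuclideanSpace ℝ (Fin 2) := EuclideanSpace.single 1 (1 : ℝ)
  have h1 := (fderiv ℝ S.h x - ContinuousLinearMap.id ℝ _).le_of_opNorm_le (hcx x hx).1 e
  have h2 := (PiLp.norm_apply_le
    ((fderiv ℝ S.h x - ContinuousLinearMap.id ℝ (EuclideanSpace ℝ (Fin 2))) e) 1).trans h1
  simp [e] at h2
  have := (abs_le.1 h2).1
  simp only [e]
  linarith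

end SaddleFlow


/-- Lemma 3.3(i): there is a nonzero row vector `D₀` (namely the second row of `Dh(x₀)`)
such that `e^{−λt} Dφ_t(x₀)` converges, as `t → ∞`, to the matrix with first row `(0,0)`
and second row `D₀`. Row vectors are represented by vectors acting via the inner
product, so the limit matrix is `z ↦ ⟪D₀, z⟫ • e₂`. -/
theorem jacobian_rescaled_limit (S : SaddleFlow) (x₀ : EuclideanSpace ℝ (Fin 2))
    (hx₀_pos : 0 < ‖x₀‖) (hx₀_lt : ‖x₀‖ < S.delta / 8)
    (hx₀_stable : Tendsto (fun t => S.phi t x₀) atTop (𝓝 (0 : EuclideanSpace ℝ (Fin 2)))) :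
    ∃ D₀ : EuclideanSpace ℝ (Fin 2), D₀ ≠ 0 ∧
      (∀ z : EuclideanSpace ℝ (Fin 2), ⟪D₀, z⟫ = fderiv ℝ S.h x₀ z 1) ∧
      Tendsto (fun t => Real.exp (-S.lam * t) • fderiv ℝ (S.phi t) x₀) atTop
        (𝓝 ((innerSL ℝ D₀).smulRight (EuclideanSpace.single 1 (1 : ℝ)))) := by
  have hδ : ‖x₀‖ < S.delta := by linarith [S.delta_pos]
  have hxU : x₀ ∈ S.U := (S.ball_sub (by simpa using hδ.le)).1
  set D₀ : EuclideanSpace ℝ (Fin 2) := (InnerProductSpace.toDual ℝ _).symm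
    ((EuclideanSpace.proj (1 : Fin 2)).comp (fderiv ℝ S.h x₀)) with hD₀
  have hD : ∀ z : EuclideanSpace ℝ (Fin 2), ⟪D₀, z⟫ = fderiv ℝ S.h x₀ z 1 := by
    intro z
    rw [hD₀, InnerProductSpace.toDual_symm_apply]
    simp
  refine ⟨D₀, ?_, hD, ?_⟩
  · intro h0
    have h1 := S.fderiv_h_apply_single_pos hδ
    rw [← hD, h0, inner_zero_left] at h1
    exact lt_irrefl _ h1
  have hy : Tendsto (fun t => S.h (S.phi t x₀)) atTop (𝓝 0) := by
    have := S.hasFDerivAt_h_zero.continuousAt.tendsto.comp hx₀_stable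
    rwa [S.h_zero] at this
  have hA : Tendsto (fun t => fderiv ℝ S.hinv (S.h (S.phi t x₀))) atTop
      (𝓝 (ContinuousLinearMap.id ℝ (EuclideanSpace ℝ (Fin 2)))) := by
    have := (S.contDiffAt_hinv_zero.continuousAt_fderiv one_ne_zero).tendsto.comp hy
    rwa [S.fderiv_hinv_zero] at this
  have hE : Tendsto (fun t : ℝ => Real.exp (-(S.lam + S.mu) * t)) atTop (𝓝 0) :=
    Real.tendsto_exp_atBot.comp
      (tendsto_id.const_mul_atTop_of_neg (by linarith [S.lam_pos, S.mu_pos]))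
  have hdiag : Tendsto (fun t : ℝ => diagCLM (Real.exp (-(S.lam + S.mu) * t)) 1) atTop
      (𝓝 (diagCLM 0 1)) := (hE.smul_const _).add_const _
  -- Composition is the product of the normed algebra of endomorphisms of `ℝ²`.
  have hlim := hA.mul (hdiag.mul_const (fderiv ℝ S.h x₀))
  have hval : ContinuousLinearMap.id ℝ (EuclideanSpace ℝ (Fin 2)) *
      (diagCLM 0 1 * fderiv ℝ S.h x₀) =
      (innerSL ℝ D₀).smulRight (EuclideanSpace.single 1 (1 : ℝ)) := by
    ext z i
    simp [diagCLM, hD]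
  rw [hval] at hlim
  refine hlim.congr' ?_
  filter_upwards [hx₀_stable (S.U_open.mem_nhds S.U_mem)] with t ht
  rw [S.fderiv_phi hxU ht, ← ContinuousLinearMap.comp_smul, ← ContinuousLinearMap.smul_comp,
    smul_diagCLM, ← Real.exp_add, ← Real.exp_add]
  congr 4
  · ring_nf
  · rw [show -S.lam * t + S.lam * t = 0 by ring, Real.exp_zero]
end
end

section
/- There exist constants K ≥ 0 and α ∈ (0, 1] such that for all t ≥ 0 and all x, y ∈ ℝ² with |x| + |y| < δ and sup_{0 ≤ θ ≤ 1} |φ_t(x + θy)| < δ/2, one has ‖Dφ_t(x + y) − Dφ_t(x)‖ ≤ K e^{λt(1+α)} |y|^α (Lemma 3.3(iii)). -/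
/-!
Near a point `x` with `‖x‖ < δ` and `‖φ_t x‖ < δ / 2` the conjugation gives
`φ_t = h⁻¹ ∘ e^{Bt} ∘ h`, so by the chain rule (`hasFDerivAt_phi`)
`Dφ_t(x) = Dh⁻¹(p x) ∘ e^{Bt} ∘ Dh(x)` with `p x = e^{Bt} h(x)`.
Writing `x' = x + y`, the difference of two such Jacobians splits as
`(Dh⁻¹(p x') - Dh⁻¹(p x)) e^{Bt} Dh(x') + Dh⁻¹(p x) e^{Bt} (Dh(x') - Dh(x))`.
For `t ≥ 0` one has `‖e^{Bt}‖ ≤ e^{λt}`, the outer derivatives have norm at most `3/2`, and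
`‖p x' - p x‖ ≤ (3/2) e^{λt} ‖y‖` by the mean value inequality, so the Hölder continuity of `Dh` and
`Dh⁻¹` yields the bound with `α = α₀`. Only the endpoints `x` and `x + y` of the segment need
to be mapped into the ball of radius `δ / 2`.
-/

open Filter Topology Metric Real RealInnerProductSpace

noncomputable section

/-- The Euclidean plane. -/
abbrev E2 := EuclideanSpace ℝ (Fin 2)

/-- The linear flow `e^{Bt} = diag(e^{-μt}, e^{λt})` as a continuous linear map. -/
def expB (S : SaddleFlow) (t : ℝ) : E2 →L[ℝ] E2 :=
  LinearMap.toContinuousLinearMap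
    { toFun := fun v => vec2 (Real.exp (-S.mu * t) * v 0) (Real.exp (S.lam * t) * v 1)
      map_add' := fun v w => by
        ext i; fin_cases i <;> simp [vec2, mul_add]
      map_smul' := fun c v => by
        ext i; fin_cases i <;> simp [vec2] <;> ring }

lemma expB_apply (S : SaddleFlow) (t : ℝ) (v : E2) :
    expB S t v = vec2 (Real.exp (-S.mu * t) * v 0) (Real.exp (S.lam * t) * v 1) := rfl

lemma norm_expB_le (S : SaddleFlow) {t : ℝ} (ht : 0 ≤ t) :
    ‖expB S t‖ ≤ Real.exp (S.lam * t) := by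
  refine ContinuousLinearMap.opNorm_le_bound _ (Real.exp_pos _).le fun v => ?_
  have h1 : Real.exp (-S.mu * t) ≤ Real.exp (S.lam * t) :=
    Real.exp_le_exp.2 (by nlinarith [mul_nonneg S.lam_pos.le ht, mul_nonneg S.mu_pos.le ht])
  refine (sq_le_sq₀ (norm_nonneg _) (by positivity)).1 ?_
  rw [mul_pow, EuclideanSpace.real_norm_sq_eq, EuclideanSpace.real_norm_sq_eq, expB_apply]
  simp only [vec2, Fin.sum_univ_two, WithLp.equiv_symm_apply, Matrix.cons_val_zero,
    Matrix.cons_val_one, mul_pow, mul_add]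
  gcongr

lemma mem_U (S : SaddleFlow) {x : E2} (hx : ‖x‖ < S.delta) : x ∈ S.U :=
  (S.ball_sub (by simpa using hx.le)).1

lemma norm_fderiv_h_le (S : SaddleFlow) {x : E2} (hx : ‖x‖ < S.delta) :
    ‖fderiv ℝ S.h x‖ ≤ 3 / 2 := by
  obtain ⟨c, hc, hd⟩ := S.deriv_close
  have h1 := norm_le_norm_sub_add (fderiv ℝ S.h x) (ContinuousLinearMap.id ℝ E2)
  have h2 := ContinuousLinearMap.norm_id_le (𝕜 := ℝ) (E := E2)
  linarith [(hd x hx).1]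

lemma norm_fderiv_hinv_le (S : SaddleFlow) {x : E2} (hx : ‖x‖ < S.delta) :
    ‖fderiv ℝ S.hinv x‖ ≤ 3 / 2 := by
  obtain ⟨c, hc, hd⟩ := S.deriv_close
  have h1 := norm_le_norm_sub_add (fderiv ℝ S.hinv x) (ContinuousLinearMap.id ℝ E2)
  have h2 := ContinuousLinearMap.norm_id_le (𝕜 := ℝ) (E := E2)
  linarith [(hd x hx).2]

lemma norm_h_sub_le (S : SaddleFlow) {x x' : E2} (hx : ‖x‖ < S.delta) (hx' : ‖x'‖ < S.delta) :
    ‖S.h x' - S.h x‖ ≤ 3 / 2 * ‖x' - x‖ := by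
  refine (convex_ball (0 : E2) S.delta).norm_image_sub_le_of_norm_fderiv_le (𝕜 := ℝ)
    (fun z hz => ?_) (fun z hz => ?_) (by simpa using hx) (by simpa using hx')
  · exact (S.h_smooth z (mem_U S (by simpa using hz))).differentiableAt one_ne_zero
  · exact norm_fderiv_h_le S (by simpa using hz)

lemma h_phi (S : SaddleFlow) {t : ℝ} {x : E2} (hx : ‖x‖ < S.delta)
    (hp : ‖S.phi t x‖ < S.delta / 2) : S.h (S.phi t x) = expB S t (S.h x) :=
  S.h_conj t x (mem_U S hx) (mem_U S (by linarith [S.delta_pos]))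

lemma expB_h_mem (S : SaddleFlow) {t : ℝ} {x : E2} (hx : ‖x‖ < S.delta)
    (hp : ‖S.phi t x‖ < S.delta / 2) : expB S t (S.h x) ∈ S.h '' S.U :=
  ⟨_, mem_U S (by linarith [S.delta_pos]), h_phi S hx hp⟩

/-- This is where the ratio bound `|h x| ≤ 2 |x|` meets the radius `δ / 2`. -/
lemma norm_expB_h_lt (S : SaddleFlow) {t : ℝ} {x : E2} (hx : ‖x‖ < S.delta)
    (hp : ‖S.phi t x‖ < S.delta / 2) : ‖expB S t (S.h x)‖ < S.delta := by
  obtain ⟨c, hc, hr⟩ := S.h_ratio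
  rw [← h_phi S hx hp]
  have := (hr (S.phi t x) (by linarith [S.delta_pos])).1
  nlinarith [norm_nonneg (S.phi t x)]

/-- Chain rule for `φ_t = h⁻¹ ∘ e^{Bt} ∘ h`, valid near `x` because `‖x‖ < δ` and
`‖φ_t x‖ < δ / 2` are open conditions. -/
lemma hasFDerivAt_phi (S : SaddleFlow) {t : ℝ} {x : E2} (hx : ‖x‖ < S.delta)
    (hp : ‖S.phi t x‖ < S.delta / 2) :
    HasFDerivAt (S.phi t)
      ((fderiv ℝ S.hinv (expB S t (S.h x))).comp ((expB S t).comp (fderiv ℝ S.h x))) x := by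
  have h1 : HasFDerivAt S.h (fderiv ℝ S.h x) x :=
    ((S.h_smooth x (mem_U S hx)).differentiableAt one_ne_zero).hasFDerivAt
  have h2 : HasFDerivAt S.hinv (fderiv ℝ S.hinv (expB S t (S.h x))) (expB S t (S.h x)) :=
    ((S.hinv_smooth _ (expB_h_mem S hx hp)).differentiableAt one_ne_zero).hasFDerivAt
  refine (h2.comp x ((expB S t).hasFDerivAt.comp x h1)).congr_of_eventuallyEq ?_
  have e1 : ∀ᶠ z in 𝓝 x, ‖z‖ < S.delta := continuous_norm.continuousAt.eventually_lt_const hx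
  have e2 : ∀ᶠ z in 𝓝 x, ‖S.phi t z‖ < S.delta / 2 :=
    (S.phi_contDiff t).continuous.norm.continuousAt.eventually_lt_const hp
  filter_upwards [e1, e2] with z hz hpz
  simp only [Function.comp_apply]
  rw [← h_phi S hz hpz, S.left_inv _ (mem_U S (by linarith [S.delta_pos]))]

/-- Lemma 3.3(iii): there are constants `K ≥ 0` and `α ∈ (0,1]` such that whenever
`|x| + |y| < δ` and `|φ_t(x + θy)| < δ/2` for all `θ ∈ [0,1]` (with `t ≥ 0`), one has
`‖Dφ_t(x+y) − Dφ_t(x)‖ ≤ K e^{λt(1+α)} |y|^α`. -/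
theorem jacobian_holder_bound (S : SaddleFlow) :
    ∃ K : ℝ, 0 ≤ K ∧ ∃ α : ℝ, α ∈ Set.Ioc (0 : ℝ) 1 ∧
      ∀ t : ℝ, 0 ≤ t → ∀ x y : EuclideanSpace ℝ (Fin 2),
        ‖x‖ + ‖y‖ < S.delta →
        (∀ θ : ℝ, θ ∈ Set.Icc (0 : ℝ) 1 → ‖S.phi t (x + θ • y)‖ < S.delta / 2) →
        ‖fderiv ℝ (S.phi t) (x + y) - fderiv ℝ (S.phi t) x‖ ≤
          K * Real.exp (S.lam * t * (1 + α)) * ‖y‖ ^ α := by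
  obtain ⟨C₀, hC1, hC2⟩ := S.holder
  obtain ⟨ha0, ha1⟩ := S.alpha0_mem
  -- The Hölder constant is not assumed nonnegative.
  set C := max C₀ 0
  have hC : 0 ≤ C := le_max_right _ _
  refine ⟨15 / 4 * C, by positivity, S.alpha0, ⟨ha0, ha1⟩, fun t ht x y hxy hθ => ?_⟩
  have hx : ‖x‖ < S.delta := by linarith [norm_nonneg y]
  have hx' : ‖x + y‖ < S.delta := (norm_add_le x y).trans_lt hxy
  have hp : ‖S.phi t x‖ < S.delta / 2 := by simpa using hθ 0 (by simp)
  have hp' : ‖S.phi t (x + y)‖ < S.delta / 2 := by simpa using hθ 1 (by simp)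
  rw [(hasFDerivAt_phi S hx hp).fderiv, (hasFDerivAt_phi S hx' hp').fderiv]
  set L := expB S t
  set G := fderiv ℝ S.hinv (L (S.h x))
  set G' := fderiv ℝ S.hinv (L (S.h (x + y)))
  set A := fderiv ℝ S.h x
  set A' := fderiv ℝ S.h (x + y)
  set e := Real.exp (S.lam * t) with he
  have he1 : 1 ≤ e := Real.one_le_exp (mul_nonneg S.lam_pos.le ht)
  have hL : ‖L‖ ≤ e := norm_expB_le S ht
  have hG : ‖G‖ ≤ 3 / 2 := norm_fderiv_hinv_le S (norm_expB_h_lt S hx hp)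
  have hA' : ‖A'‖ ≤ 3 / 2 := norm_fderiv_h_le S hx'
  have hAA : ‖A' - A‖ ≤ C * ‖y‖ ^ S.alpha0 := by
    have := hC1 _ (mem_U S hx') _ (mem_U S hx)
    rw [add_sub_cancel_left] at this
    exact this.trans (by gcongr; exact le_max_left _ _)
  have hpp : ‖L (S.h (x + y)) - L (S.h x)‖ ≤ e * (3 / 2 * ‖y‖) := by
    rw [← map_sub]
    refine (L.le_opNorm _).trans ?_
    have := norm_h_sub_le S hx hx'
    rw [add_sub_cancel_left] at this
    gcongr
  have hGG : ‖G' - G‖ ≤ C * (e ^ S.alpha0 * (3 / 2 * ‖y‖ ^ S.alpha0)) := by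
    refine (hC2 _ (expB_h_mem S hx' hp') _ (expB_h_mem S hx hp)).trans ?_
    have h32 : (3 / 2 : ℝ) ^ S.alpha0 ≤ 3 / 2 := by
      simpa using Real.rpow_le_rpow_of_exponent_le (by norm_num : (1 : ℝ) ≤ 3 / 2) ha1
    have : ‖L (S.h (x + y)) - L (S.h x)‖ ^ S.alpha0 ≤ e ^ S.alpha0 * (3 / 2 * ‖y‖ ^ S.alpha0) := by
      refine (Real.rpow_le_rpow (norm_nonneg _) hpp ha0.le).trans ?_
      rw [Real.mul_rpow (by positivity) (by positivity), Real.mul_rpow (by norm_num) (norm_nonneg _)]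
      gcongr
    refine le_trans (mul_le_mul_of_nonneg_right (le_max_left C₀ 0) (by positivity)) ?_
    exact mul_le_mul_of_nonneg_left this hC
  have hexp : Real.exp (S.lam * t * (1 + S.alpha0)) = e * e ^ S.alpha0 := by
    rw [he, ← Real.exp_mul, ← Real.exp_add]; congr 1; ring
  have hea : 1 ≤ e ^ S.alpha0 := Real.one_le_rpow he1 ha0.le
  have hsplit : G'.comp (L.comp A') - G.comp (L.comp A)
      = (G' - G).comp (L.comp A') + G.comp (L.comp (A' - A)) := by
    ext v : 1
    simp
  have hy : 0 ≤ ‖y‖ ^ S.alpha0 := by positivity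
  rw [hsplit, hexp]
  calc ‖(G' - G).comp (L.comp A') + G.comp (L.comp (A' - A))‖
      ≤ ‖G' - G‖ * (‖L‖ * ‖A'‖) + ‖G‖ * (‖L‖ * ‖A' - A‖) := by
        refine (norm_add_le _ _).trans (add_le_add ?_ ?_) <;>
        exact (ContinuousLinearMap.opNorm_comp_le _ _).trans
          (mul_le_mul_of_nonneg_left (ContinuousLinearMap.opNorm_comp_le _ _) (norm_nonneg _))
    _ ≤ C * (e ^ S.alpha0 * (3 / 2 * ‖y‖ ^ S.alpha0)) * (e * (3 / 2))
        + 3 / 2 * (e * (C * ‖y‖ ^ S.alpha0)) := by gcongr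
    _ ≤ C * (e ^ S.alpha0 * (3 / 2 * ‖y‖ ^ S.alpha0)) * (e * (3 / 2))
        + 3 / 2 * (e * (C * ‖y‖ ^ S.alpha0)) * e ^ S.alpha0 := by
        refine add_le_add le_rfl ?_
        exact le_mul_of_one_le_right (by positivity) hea
    _ = 15 / 4 * C * (e * e ^ S.alpha0) * ‖y‖ ^ S.alpha0 := by ring
end
end

section
/- For every C > 0 and every ε > 0 there exist R₀ > 0 and ρ ∈ (0, 1) such that for all z ∈ ℝ² with 0 < |z| < ρ, D₀z ≠ 0 and |z| ≤ C |D₀z|, and all t ∈ [R₀, −(1/λ) log|z| − R₀], there exist w₁, w₂ ∈ ℝ² with |w₁| ≤ ε and |w₂| ≤ ε such that φ_t(x₀ + z) = x̄₀ e^{−μt} (e₁ + w₁) + (D₀z) e^{λt} (e₂ + w₂), where e₁, e₂ is the standard basis of ℝ² (Theorem 3.4: linear form of solutions starting near the stable manifold). -/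
/-!
In the coordinates given by `h` the flow is linear, so `φ_t(x₀ + z) = h⁻¹(e^{Bt} h(x₀ + z))` for as
long as the linear trajectory stays in the ball of radius `δ / 2` (`phi_eq_hinv`, an intermediate
value argument). Three facts then give the linear form.

* `h x₀ = (x̄₀, 0)`: since `φ_t x₀ → 0`, conjugation rules out an unstable component of `h x₀`, and
  since `h` is tangent to the identity, `e^{μt} h(φ_t x₀)` has the same limit as `e^{μt} φ_t x₀`
  (`h_base_one`, `h_base_zero`).
* The second row of `Dh(x₀)` is `D₀`: differentiate the conjugation at `x₀`, multiply by `e^{-λt}`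
  and let `t → ∞`, using `Dh(0) = I` (`fderiv_h_base`).
* `h⁻¹(y) = y + o(|y|)` at `0` (`hasFDerivAt_hinv`).

Hence `h(x₀ + z) = (x̄₀ + O(|z|), D₀z + o(|z|))`, and because `|z| ≤ C |D₀z|` both errors are
small *relative* to the corresponding main term. Write `A = x̄₀ e^{-μt}` and `B = (D₀z) e^{λt}`.
On `[R₀, -(1/λ) log |z| - R₀]` one has `|A| ≤ |x̄₀| e^{-μR₀}` and `|B| ≤ |D₀| e^{-λR₀}`, so for large
`R₀` the linear trajectory is so close to `0` at time `t` that `h⁻¹` also contributes only a small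
relative error. The total error is at most `ε (|A| + |B|)` and can be shared out between the two
terms (`exists_split`).
-/

open Filter Topology Metric Real RealInnerProductSpace

noncomputable section

/-! ### Vectors in the plane -/

@[simp] lemma vec2_zero (a b : ℝ) : vec2 a b 0 = a := rfl

@[simp] lemma vec2_one (a b : ℝ) : vec2 a b 1 = b := rfl

lemma norm_le_abs_add_abs (x : EuclideanSpace ℝ (Fin 2)) : ‖x‖ ≤ |x 0| + |x 1| := by
  rw [EuclideanSpace.norm_eq]
  apply Real.sqrt_le_iff.2
  refine ⟨by positivity, ?_⟩
  simp only [Fin.sum_univ_two, Real.norm_eq_abs]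
  nlinarith [abs_nonneg (x 0), abs_nonneg (x 1)]

lemma abs_coord_le (x : EuclideanSpace ℝ (Fin 2)) (i : Fin 2) : |x i| ≤ ‖x‖ := by
  simpa using PiLp.norm_apply_le x i

/-- An error bounded by `ε (|A| + |B|)` is shared between two directions of sizes `A` and `B`
so that each relative error is at most `ε`. -/
lemma exists_split {e f v : EuclideanSpace ℝ (Fin 2)} {A B ε : ℝ} (hA : A ≠ 0) (hB : B ≠ 0)
    (hv : ‖v - (A • e + B • f)‖ ≤ ε * (|A| + |B|)) :
    ∃ w₁ w₂ : EuclideanSpace ℝ (Fin 2), ‖w₁‖ ≤ ε ∧ ‖w₂‖ ≤ ε ∧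
      v = A • (e + w₁) + B • (f + w₂) := by
  have hA' := abs_pos.2 hA
  have hB' := abs_pos.2 hB
  have hs : 0 < |A| + |B| := by positivity
  -- `A w₁ = |A| / (|A| + |B|) • E` and `B w₂ = |B| / (|A| + |B|) • E`, where `E` is the error
  have key : ∀ X : ℝ, X ≠ 0 →
      ‖(|X| / X / (|A| + |B|)) • (v - (A • e + B • f))‖ ≤ ε := by
    intro X hX
    have hX' := abs_pos.2 hX
    rw [norm_smul, Real.norm_eq_abs, abs_div, abs_div, abs_abs, div_self hX'.ne', abs_of_pos hs,
      div_mul_eq_mul_div, one_mul, div_le_iff₀ hs]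
    exact hv
  refine ⟨_, _, key A hA, key B hB, ?_⟩
  rw [smul_add, smul_add, smul_smul, smul_smul]
  have h1 : A * (|A| / A / (|A| + |B|)) = |A| / (|A| + |B|) := by field_simp
  have h2 : B * (|B| / B / (|A| + |B|)) = 1 - |A| / (|A| + |B|) := by field_simp; ring
  rw [h1, h2]
  module

/-! ### The linearization at the fixed point and the trapped orbits -/

namespace SaddleFlow

variable (S : SaddleFlow)

lemma mem_U {x : EuclideanSpace ℝ (Fin 2)} (hx : ‖x‖ ≤ S.delta) : x ∈ S.U :=
  (S.ball_sub (by simpa using hx)).1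

lemma hinv_zero : S.hinv 0 = 0 := by
  simpa [S.h_zero] using S.left_inv 0 S.U_mem

lemma hasFDerivAt_hinv :
    HasFDerivAt S.hinv (ContinuousLinearMap.id ℝ (EuclideanSpace ℝ (Fin 2))) 0 := by
  have h1 : HasFDerivAt S.hinv (fderiv ℝ S.hinv 0) (S.h 0) := by
    rw [S.h_zero]
    exact ((S.hinv_smooth 0 ⟨0, S.U_mem, S.h_zero⟩).differentiableAt one_ne_zero).hasFDerivAt
  have h2 := h1.comp 0 S.hasFDerivAt_h_zero
  have h3 : S.hinv ∘ S.h =ᶠ[𝓝 0] id := by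
    filter_upwards [S.U_open.mem_nhds S.U_mem] with x hx using S.left_inv x hx
  have h4 := h2.unique ((hasFDerivAt_id 0).congr_of_eventuallyEq h3)
  rw [ContinuousLinearMap.comp_id] at h4
  rw [S.h_zero, h4] at h1
  exact h1

/-- As long as the linear trajectory through `h x` stays in the ball of radius `δ / 2`, the orbit
of `x` stays in the ball of radius `δ` and is the image of that trajectory under `h⁻¹`. -/
lemma phi_eq_hinv {x : EuclideanSpace ℝ (Fin 2)} (hx : ‖x‖ < S.delta) {T : ℝ} (hT : 0 ≤ T)
    (hy : ∀ t ∈ Set.Icc 0 T,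
      ‖vec2 (Real.exp (-S.mu * t) * (S.h x) 0) (Real.exp (S.lam * t) * (S.h x) 1)‖
        < S.delta / 2) :
    S.phi T x =
      S.hinv (vec2 (Real.exp (-S.mu * T) * (S.h x) 0) (Real.exp (S.lam * T) * (S.h x) 1)) := by
  have hδ := S.delta_pos
  have conj : ∀ t, ‖S.phi t x‖ ≤ S.delta → S.phi t x =
      S.hinv (vec2 (Real.exp (-S.mu * t) * (S.h x) 0) (Real.exp (S.lam * t) * (S.h x) 1)) := by
    intro t ht
    rw [← S.h_conj t x (S.mem_U hx.le) (S.mem_U ht), S.left_inv _ (S.mem_U ht)]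
  apply conj
  by_contra! hlt
  have hcont : Continuous fun t => ‖S.phi t x‖ :=
    (continuous_iff_continuousAt.2 fun t => (S.phi_hasDerivAt t x).continuousAt).norm
  -- an orbit leaving the ball would meet the sphere of radius `δ`, where `‖h⁻¹ y‖ ≤ 2 ‖y‖ < δ`
  obtain ⟨t, ht, hte⟩ := intermediate_value_Icc hT hcont.continuousOn
    (show S.delta ∈ Set.Icc _ _ from ⟨by simpa [S.phi_zero] using hx.le, hlt.le⟩)
  obtain ⟨c, hc, hr⟩ := S.h_ratio
  have h1 := hy t ht
  have h2 := (hr _ (h1.trans (by linarith))).2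
  rw [← conj t hte.le] at h2
  simp only at hte
  rw [hte] at h2
  nlinarith [norm_nonneg
    (vec2 (Real.exp (-S.mu * t) * (S.h x) 0) (Real.exp (S.lam * t) * (S.h x) 1))]

/-! ### The linearization at a point of the stable manifold -/

section Base

variable {S} {x₀ : EuclideanSpace ℝ (Fin 2)}

lemma eventually_mem_U
    (hst : Tendsto (fun t => S.phi t x₀) atTop (𝓝 (0 : EuclideanSpace ℝ (Fin 2)))) :
    ∀ᶠ t in atTop, S.phi t x₀ ∈ S.U :=
  hst.eventually (S.U_open.mem_nhds S.U_mem)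

lemma h_base_one (hU : x₀ ∈ S.U)
    (hst : Tendsto (fun t => S.phi t x₀) atTop (𝓝 (0 : EuclideanSpace ℝ (Fin 2)))) :
    (S.h x₀) 1 = 0 := by
  have h1 : Tendsto (fun t => S.h (S.phi t x₀)) atTop (𝓝 0) := by
    have := S.hasFDerivAt_h_zero.continuousAt.tendsto.comp hst
    rwa [S.h_zero] at this
  have h2 : Tendsto (fun t => (S.h (S.phi t x₀)) 1) atTop (𝓝 0) := by
    simpa [Function.comp_def] using
      ((EuclideanSpace.proj (𝕜 := ℝ) (1 : Fin 2)).continuous.tendsto _).comp h1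
  have h3 : Tendsto (fun t => Real.exp (-(S.lam * t))) atTop (𝓝 0) :=
    Real.tendsto_exp_neg_atTop_nhds_zero.comp (tendsto_id.const_mul_atTop S.lam_pos)
  have h4 := h3.mul h2
  rw [zero_mul] at h4
  refine tendsto_nhds_unique (tendsto_const_nhds.congr' ?_) h4
  filter_upwards [eventually_mem_U hst] with t ht
  rw [S.h_conj t x₀ hU ht, vec2_one, ← mul_assoc, ← Real.exp_add]
  simp

lemma h_base_zero (hU : x₀ ∈ S.U) {xb : ℝ}
    (hst : Tendsto (fun t => S.phi t x₀) atTop (𝓝 (0 : EuclideanSpace ℝ (Fin 2))))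
    (hxb : Tendsto (fun t => Real.exp (S.mu * t) • S.phi t x₀) atTop (𝓝 (vec2 xb 0))) :
    (S.h x₀) 0 = xb := by
  have h1 : (fun t => Real.exp (S.mu * t) • (S.h (S.phi t x₀) - S.phi t x₀)) =o[atTop]
      (fun t => Real.exp (S.mu * t) • S.phi t x₀) :=
    (Asymptotics.isBigO_refl _ _).smul_isLittleO (S.h_littleO.comp_tendsto hst)
  have h2 := (Asymptotics.isLittleO_one_iff ℝ).1 (h1.trans_isBigO (hxb.isBigO_one ℝ))
  have h3 := h2.add hxb
  rw [zero_add] at h3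
  have h4 := ((EuclideanSpace.proj (𝕜 := ℝ) (0 : Fin 2)).continuous.tendsto _).comp h3
  refine tendsto_nhds_unique (tendsto_const_nhds.congr' ?_) h4
  filter_upwards [eventually_mem_U hst] with t ht
  simp only [Function.comp_apply, ← smul_add, sub_add_cancel, S.h_conj t x₀ hU ht]
  simp [← mul_assoc, ← Real.exp_add]

/-- The second row of `Dh(x₀)` is the limiting linear form `D₀`. -/
lemma fderiv_h_base (hU : x₀ ∈ S.U) {D₀ : EuclideanSpace ℝ (Fin 2)}
    (hst : Tendsto (fun t => S.phi t x₀) atTop (𝓝 (0 : EuclideanSpace ℝ (Fin 2))))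
    (hD₀ : Tendsto (fun t => Real.exp (-S.lam * t) • fderiv ℝ (S.phi t) x₀) atTop
      (𝓝 ((innerSL ℝ D₀).smulRight (EuclideanSpace.single 1 (1 : ℝ)))))
    (z : EuclideanSpace ℝ (Fin 2)) : (fderiv ℝ S.h x₀ z) 1 = ⟪D₀, z⟫ := by
  have hd : ∀ x ∈ S.U, HasFDerivAt S.h (fderiv ℝ S.h x) x := fun x hx =>
    ((S.h_smooth x hx).differentiableAt one_ne_zero).hasFDerivAt
  have h1 : Tendsto (fun t => fderiv ℝ S.h (S.phi t x₀)) atTop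
      (𝓝 (ContinuousLinearMap.id ℝ (EuclideanSpace ℝ (Fin 2)))) := by
    have := ((S.h_smooth 0 S.U_mem).continuousAt_fderiv one_ne_zero).tendsto.comp hst
    rwa [S.hasFDerivAt_h_zero.fderiv] at this
  have happ : Continuous fun q : (EuclideanSpace ℝ (Fin 2) →L[ℝ] EuclideanSpace ℝ (Fin 2)) ×
      EuclideanSpace ℝ (Fin 2) => q.1 q.2 := continuous_fst.clm_apply continuous_snd
  have h2 := (happ.tendsto _).comp (h1.prodMk_nhds
    ((happ.tendsto _).comp (hD₀.prodMk_nhds (tendsto_const_nhds (x := z)))))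
  have h3 := ((EuclideanSpace.proj (𝕜 := ℝ) (1 : Fin 2)).continuous.tendsto _).comp h2
  have h4 : (fun _ => (fderiv ℝ S.h x₀ z) 1) =ᶠ[atTop]
      (EuclideanSpace.proj (𝕜 := ℝ) (1 : Fin 2)) ∘ fun t => fderiv ℝ S.h (S.phi t x₀)
        ((Real.exp (-S.lam * t) • fderiv ℝ (S.phi t) x₀) z) := by
    filter_upwards [eventually_mem_U hst] with t ht
    have hφ : HasFDerivAt (S.phi t) (fderiv ℝ (S.phi t) x₀) x₀ :=
      ((S.phi_contDiff t).differentiable one_ne_zero x₀).hasFDerivAt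
    have hl := (EuclideanSpace.proj (𝕜 := ℝ) (1 : Fin 2)).hasFDerivAt.comp x₀
      ((hd _ ht).comp x₀ hφ)
    have hr := ((EuclideanSpace.proj (𝕜 := ℝ) (1 : Fin 2)).hasFDerivAt.comp x₀
      (hd x₀ hU)).const_mul (Real.exp (S.lam * t))
    have heq : (⇑(EuclideanSpace.proj (𝕜 := ℝ) (1 : Fin 2)) ∘ S.h ∘ S.phi t) =ᶠ[𝓝 x₀]
        fun y => Real.exp (S.lam * t) * (⇑(EuclideanSpace.proj (𝕜 := ℝ) (1 : Fin 2)) ∘ S.h) y := by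
      filter_upwards [S.U_open.mem_nhds hU, hφ.continuousAt (S.U_open.mem_nhds ht)] with y hy hy'
      simp [S.h_conj t y hy hy']
    have hz := congrArg (fun L => L z) (hl.unique (hr.congr_of_eventuallyEq heq))
    simp at hz
    simp [hz, ← mul_assoc, ← Real.exp_add]
  have h5 := tendsto_nhds_unique (tendsto_const_nhds.congr' h4) h3
  simpa using h5

/-- On the cone `|z| ≤ C |D₀z|` both coordinates of `h (x₀ + z)` are close, in relative terms, to
`x̄₀` and `D₀z`. -/
lemma h_near_base (hU : x₀ ∈ S.U) {xb : ℝ} (hxb : xb ≠ 0) (h0 : (S.h x₀) 0 = xb)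
    (h1 : (S.h x₀) 1 = 0) {D₀ : EuclideanSpace ℝ (Fin 2)}
    (hD : ∀ z, (fderiv ℝ S.h x₀ z) 1 = ⟪D₀, z⟫) {C η : ℝ} (hC : 0 < C) (hη : 0 < η) :
    ∀ᶠ z in 𝓝 (0 : EuclideanSpace ℝ (Fin 2)), ‖z‖ ≤ C * |⟪D₀, z⟫| →
      |(S.h (x₀ + z)) 0 - xb| ≤ η * |xb| ∧ |(S.h (x₀ + z)) 1 - ⟪D₀, z⟫| ≤ η * |⟪D₀, z⟫| := by
  have hd : HasFDerivAt S.h (fderiv ℝ S.h x₀) x₀ :=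
    ((S.h_smooth x₀ hU).differentiableAt one_ne_zero).hasFDerivAt
  have hc : Tendsto (fun z => S.h (x₀ + z)) (𝓝 0) (𝓝 (S.h x₀)) := by
    have : Tendsto (fun z => x₀ + z) (𝓝 0) (𝓝 x₀) :=
      (continuous_const.add continuous_id).tendsto' _ _ (by simp)
    exact hd.continuousAt.tendsto.comp this
  have hpos : 0 < η * |xb| := mul_pos hη (abs_pos.2 hxb)
  have hl := (hasFDerivAt_iff_isLittleO_nhds_zero.1 hd).def (div_pos hη hC)
  filter_upwards [hc.eventually (Metric.ball_mem_nhds _ hpos), hl] with z hz hz' hcone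
  have hz1 : ‖S.h (x₀ + z) - S.h x₀‖ < η * |xb| := mem_ball_iff_norm.1 hz
  constructor
  · have := (abs_coord_le (S.h (x₀ + z) - S.h x₀) 0).trans hz1.le
    rwa [PiLp.sub_apply, h0] at this
  · have := (abs_coord_le (S.h (x₀ + z) - S.h x₀ - fderiv ℝ S.h x₀ z) 1).trans hz'
    simp only [PiLp.sub_apply, h1, hD, sub_zero] at this
    refine this.trans ?_
    rw [div_mul_eq_mul_div, div_le_iff₀ hC]
    nlinarith

end Base

end SaddleFlow

/-! ### The linear form -/

set_option maxHeartbeats 1000000 in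
/-- Theorem 3.4: linear form of solutions starting near the stable manifold. For every
`C > 0` and `ε > 0` there are `R₀ > 0` and `ρ ∈ (0,1)` such that for all `z` with
`0 < |z| < ρ`, `D₀z ≠ 0`, `|z| ≤ C|D₀z|`, and all `t ∈ [R₀, −(1/λ)log|z| − R₀]`, one has
`φ_t(x₀ + z) = x̄₀ e^{−μt}(e₁ + w₁) + (D₀z) e^{λt}(e₂ + w₂)` with `|wᵢ| ≤ ε`. -/
theorem linear_form_near_stable_manifold (S : SaddleFlow) (x₀ : EuclideanSpace ℝ (Fin 2))
    (hx₀_pos : 0 < ‖x₀‖) (hx₀_lt : ‖x₀‖ < S.delta / 8)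
    (hx₀_stable : Tendsto (fun t => S.phi t x₀) atTop (𝓝 (0 : EuclideanSpace ℝ (Fin 2))))
    (xb : ℝ) (hxb_pos : 0 < |xb|) (hxb_lt : |xb| < S.delta / 4)
    (hxb : Tendsto (fun t => Real.exp (S.mu * t) • S.phi t x₀) atTop (𝓝 (vec2 xb 0)))
    (D₀ : EuclideanSpace ℝ (Fin 2)) (hD₀_ne : D₀ ≠ 0)
    (hD₀ : Tendsto (fun t => Real.exp (-S.lam * t) • fderiv ℝ (S.phi t) x₀) atTop
      (𝓝 ((innerSL ℝ D₀).smulRight (EuclideanSpace.single 1 (1 : ℝ))))) :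
    ∀ C : ℝ, 0 < C → ∀ ε : ℝ, 0 < ε → ∃ R₀ : ℝ, 0 < R₀ ∧ ∃ ρ : ℝ, ρ ∈ Set.Ioo (0 : ℝ) 1 ∧
      ∀ z : EuclideanSpace ℝ (Fin 2), 0 < ‖z‖ → ‖z‖ < ρ → ⟪D₀, z⟫ ≠ 0 →
        ‖z‖ ≤ C * |⟪D₀, z⟫| →
        ∀ t : ℝ, R₀ ≤ t → t ≤ -(1 / S.lam) * Real.log ‖z‖ - R₀ →
          ∃ w₁ w₂ : EuclideanSpace ℝ (Fin 2), ‖w₁‖ ≤ ε ∧ ‖w₂‖ ≤ ε ∧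
            S.phi t (x₀ + z) =
              (xb * Real.exp (-S.mu * t)) • (EuclideanSpace.single 0 (1 : ℝ) + w₁) +
              (⟪D₀, z⟫ * Real.exp (S.lam * t)) • (EuclideanSpace.single 1 (1 : ℝ) + w₂) := by
  intro C hC ε hε
  have hδ := S.delta_pos
  have hlam := S.lam_pos
  have hmu := S.mu_pos
  have hU : x₀ ∈ S.U := S.mem_U (by linarith)
  have hxb0 : xb ≠ 0 := abs_pos.1 hxb_pos
  have h0 := SaddleFlow.h_base_zero hU hx₀_stable hxb
  have h1 := SaddleFlow.h_base_one hU hx₀_stable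
  have hD := SaddleFlow.fderiv_h_base hU hx₀_stable hD₀
  -- one third of `ε` comes from `h (x₀ + z)`, two thirds from `h⁻¹`
  obtain ⟨η, hη, hηε, hη2⟩ : ∃ η : ℝ, 0 < η ∧ 3 * η ≤ ε ∧ η ≤ 1 / 2 :=
    ⟨min (ε / 3) (1 / 2), by positivity, by linarith [min_le_left (ε / 3) (1 / 2)],
      min_le_right _ _⟩
  obtain ⟨r, hr, hinv_close⟩ := Metric.eventually_nhds_iff.1
    ((hasFDerivAt_iff_isLittleO_nhds_zero.1 S.hasFDerivAt_hinv).def hη)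
  obtain ⟨ρ₁, hρ₁, hnear⟩ := Metric.eventually_nhds_iff.1
    (SaddleFlow.h_near_base hU hxb0 h0 h1 hD hC hη)
  -- choice of `R₀`: both components of the linear trajectory are small on the time window
  have hexp : ∀ k K : ℝ, 0 < k → Tendsto (fun t => K * Real.exp (-(k * t))) atTop (𝓝 0) := by
    intro k K hk
    simpa using (Real.tendsto_exp_neg_atTop_nhds_zero.comp
      (tendsto_id.const_mul_atTop hk)).const_mul K
  have hr4 : 0 < r / 4 := by positivity
  have hδ16 : 0 < S.delta / 16 := by positivity
  obtain ⟨R₀, hR₀, hRA, hRB, hRB'⟩ := ((eventually_gt_atTop (0 : ℝ)).and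
    (((hexp S.mu |xb| hmu).eventually_lt_const hr4).and
    (((hexp S.lam ‖D₀‖ hlam).eventually_lt_const hr4).and
    ((hexp S.lam ‖D₀‖ hlam).eventually_lt_const hδ16)))).exists
  refine ⟨R₀, hR₀, min ρ₁ (min (1 / 2) (S.delta / 8)), ⟨by positivity, ?_⟩, ?_⟩
  · exact lt_of_le_of_lt ((min_le_right _ _).trans (min_le_left _ _)) (by norm_num)
  intro z hz hzρ hDz hcone t htR ht
  have hzρ₁ : ‖z‖ < ρ₁ := hzρ.trans_le (min_le_left _ _)
  have hzδ : ‖z‖ < S.delta / 8 := hzρ.trans_le ((min_le_right _ _).trans (min_le_right _ _))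
  obtain ⟨hp0, hp1⟩ := hnear (by simpa using hzρ₁) hcone
  have hx : ‖x₀ + z‖ < S.delta := (norm_add_le _ _).trans_lt (by linarith)
  set p := S.h (x₀ + z) with hp
  have ht0 : 0 ≤ t := hR₀.le.trans htR
  have hDz' := abs_pos.2 hDz
  have hp0' : |p 0| ≤ (1 + η) * |xb| := by
    have := abs_sub_abs_le_abs_sub (p 0) xb
    linarith
  have hp1' : |p 1| ≤ (1 + η) * |⟪D₀, z⟫| := by
    have := abs_sub_abs_le_abs_sub (p 1) ⟪D₀, z⟫
    linarith
  -- the upper end of the time window says exactly `e^{λt} |z| ≤ e^{-λR₀}`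
  have hB : |⟪D₀, z⟫| * Real.exp (S.lam * t) ≤ ‖D₀‖ * Real.exp (-(S.lam * R₀)) := by
    have h2 : S.lam * t ≤ -Real.log ‖z‖ - S.lam * R₀ := by
      calc S.lam * t ≤ S.lam * (-(1 / S.lam) * Real.log ‖z‖ - R₀) := by gcongr
        _ = _ := by field_simp
    have h3 : ‖z‖ * Real.exp (S.lam * t) ≤ Real.exp (-(S.lam * R₀)) := by
      calc ‖z‖ * Real.exp (S.lam * t) = Real.exp (Real.log ‖z‖ + S.lam * t) := by
            rw [Real.exp_add, Real.exp_log hz]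
        _ ≤ _ := Real.exp_le_exp.2 (by linarith)
    calc |⟪D₀, z⟫| * Real.exp (S.lam * t) ≤ ‖D₀‖ * ‖z‖ * Real.exp (S.lam * t) := by
          gcongr; exact abs_real_inner_le_norm _ _
      _ = ‖D₀‖ * (‖z‖ * Real.exp (S.lam * t)) := by ring
      _ ≤ _ := by gcongr
  have hA : |xb| * Real.exp (-S.mu * t) ≤ |xb| * Real.exp (-(S.mu * R₀)) := by
    gcongr
    nlinarith
  have hnorm : ∀ s, ‖vec2 (Real.exp (-S.mu * s) * p 0) (Real.exp (S.lam * s) * p 1)‖ ≤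
      (1 + η) * (|xb| * Real.exp (-S.mu * s) + |⟪D₀, z⟫| * Real.exp (S.lam * s)) := by
    intro s
    refine (norm_le_abs_add_abs _).trans ?_
    rw [vec2_zero, vec2_one, abs_mul, abs_mul, Real.abs_exp, Real.abs_exp]
    nlinarith [mul_le_mul_of_nonneg_left hp0' (Real.exp_pos (-S.mu * s)).le,
      mul_le_mul_of_nonneg_left hp1' (Real.exp_pos (S.lam * s)).le]
  have hphi := S.phi_eq_hinv hx ht0 (by
    intro s hs
    have e1 : |xb| * Real.exp (-S.mu * s) ≤ |xb| := by
      refine mul_le_of_le_one_right (abs_nonneg _) (Real.exp_le_one_iff.2 ?_)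
      nlinarith [hs.1]
    have e2 : |⟪D₀, z⟫| * Real.exp (S.lam * s) ≤ |⟪D₀, z⟫| * Real.exp (S.lam * t) := by
      gcongr
      exact hs.2
    refine (hnorm s).trans_lt ?_
    have e3 : 0 ≤ |xb| * Real.exp (-S.mu * s) + |⟪D₀, z⟫| * Real.exp (S.lam * s) := by positivity
    nlinarith)
  rw [← hp] at hphi
  set A := xb * Real.exp (-S.mu * t) with hAdef
  set B := ⟪D₀, z⟫ * Real.exp (S.lam * t) with hBdef
  have hAabs : |A| = |xb| * Real.exp (-S.mu * t) := by rw [hAdef, abs_mul, Real.abs_exp]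
  have hBabs : |B| = |⟪D₀, z⟫| * Real.exp (S.lam * t) := by rw [hBdef, abs_mul, Real.abs_exp]
  set y := vec2 (Real.exp (-S.mu * t) * p 0) (Real.exp (S.lam * t) * p 1) with hy
  have hyn : ‖y‖ ≤ (1 + η) * (|A| + |B|) := by rw [hAabs, hBabs]; exact hnorm t
  have hyr : ‖y‖ < r := by nlinarith [abs_nonneg A, abs_nonneg B]
  have hE1 : ‖S.phi t (x₀ + z) - y‖ ≤ η * ‖y‖ := by
    have := hinv_close (y := y) (by simpa using hyr)
    simpa [S.hinv_zero, ← hphi] using this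
  have hE2 : ‖y - (A • EuclideanSpace.single 0 (1 : ℝ) + B • EuclideanSpace.single 1 (1 : ℝ))‖ ≤
      η * (|A| + |B|) := by
    refine (norm_le_abs_add_abs _).trans ?_
    have c0 : |Real.exp (-S.mu * t) * p 0 - A| ≤ η * |A| := by
      rw [hAabs, hAdef, mul_comm xb, ← mul_sub, abs_mul, Real.abs_exp]
      nlinarith [mul_le_mul_of_nonneg_left hp0 (Real.exp_pos (-S.mu * t)).le]
    have c1 : |Real.exp (S.lam * t) * p 1 - B| ≤ η * |B| := by
      rw [hBabs, hBdef, mul_comm ⟪D₀, z⟫, ← mul_sub, abs_mul, Real.abs_exp]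
      nlinarith [mul_le_mul_of_nonneg_left hp1 (Real.exp_pos (S.lam * t)).le]
    rw [mul_add]
    refine add_le_add (le_of_eq_of_le ?_ c0) (le_of_eq_of_le ?_ c1) <;> simp [hy]
  refine exists_split (mul_ne_zero hxb0 (Real.exp_pos _).ne')
    (mul_ne_zero hDz (Real.exp_pos _).ne') ?_
  have htri := norm_sub_le_norm_sub_add_norm_sub (S.phi t (x₀ + z)) y
    (A • EuclideanSpace.single 0 (1 : ℝ) + B • EuclideanSpace.single 1 (1 : ℝ))
  have hAB : 0 ≤ |A| + |B| := by positivity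
  have hy2 : ‖y‖ ≤ 2 * (|A| + |B|) := hyn.trans (by gcongr; linarith)
  calc _ ≤ _ := htri
    _ ≤ η * (2 * (|A| + |B|)) + η * (|A| + |B|) := by
        gcongr
        exact hE1.trans (by gcongr)
    _ = 3 * η * (|A| + |B|) := by ring
    _ ≤ ε * (|A| + |B|) := by gcongr
end
end
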